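/- arXiv:1205.3288 — 4 statements merged into one kernel-verified Lean document; each statement's English description precedes it below -/
import Mathlib

section
/- Let (X,d) be a compact metric space and f: X → ℝ a Lipschitz function. Then for every x ∈ X and all 0 ≤ t < s one has D⁺(x,t) ≤ D⁻(x,s). Consequently, for every x ∈ X the functions t ↦ D⁺(x,t) and t ↦ D⁻(x,t) are nondecreasing on [0,∞) and they coincide for all t ∈ [0,∞) with at most countably many exceptions. -/
open Filter Topology Set MeasureTheory
open scoped ENNReal NNReal

/-- Hopf-Lax semigroup: `Q_t f (x) = inf_y ( f y + d(x,y)^2 / (2t) )`, with `Q_0 f = f`. -/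
noncomputable def HL {X : Type*} [MetricSpace X] (f : X → ℝ) (t : ℝ) (x : X) : ℝ :=
  if t = 0 then f x else ⨅ y : X, (f y + dist x y ^ 2 / (2 * t))

/-- The set of minimizers of `y ↦ f y + d(x,y)^2/(2t)`. -/
def minSet {X : Type*} [MetricSpace X] (f : X → ℝ) (t : ℝ) (x : X) : Set X :=
  {y | ∀ z : X, f y + dist x y ^ 2 / (2 * t) ≤ f z + dist x z ^ 2 / (2 * t)}

/-- `D⁺(x,t)`: the largest distance from `x` to a minimizer of `y ↦ f y + d(x,y)^2/(2t)`,
with `D⁺(x,0) = 0`. -/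
noncomputable def Dplus {X : Type*} [MetricSpace X] (f : X → ℝ) (x : X) (t : ℝ) : ℝ :=
  if t = 0 then 0 else sSup (dist x '' minSet f t x)

/-- `D⁻(x,t)`: the smallest distance from `x` to a minimizer of `y ↦ f y + d(x,y)^2/(2t)`,
with `D⁻(x,0) = 0`. -/
noncomputable def Dminus {X : Type*} [MetricSpace X] (f : X → ℝ) (x : X) (t : ℝ) : ℝ :=
  if t = 0 then 0 else sInf (dist x '' minSet f t x)

/-! Write `y` for a minimizer at time `t` and `z` for one at a later time `s`. Testing the
minimality of each against the other and adding the two inequalities cancels `f` and leaves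
`(1 / (2t) - 1 / (2s)) * (d(x,y)² - d(x,z)²) ≤ 0`, so minimizers move away from `x` as time grows.
Hence the intervals `(D⁻(x,t), D⁺(x,t))` are pairwise disjoint, and only countably many of them
are nonempty because `ℝ` is separable. -/

/-- `u` and `v` are interlaced on `S` if `u t ≤ v t ≤ u s ≤ v s` for all `t < s` in `S`; the case of
interest is `u = D⁻(x,·)`, `v = D⁺(x,·)` on `[0,∞)`. Requiring `u t ≤ v t` separately keeps it in
force when `t` is the only element of `S`. -/
structure InterlacedOn {ι α : Type*} [Preorder ι] [Preorder α] (u v : ι → α) (S : Set ι) :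
    Prop where
  le : ∀ t ∈ S, u t ≤ v t
  le_of_lt : ∀ t ∈ S, ∀ s ∈ S, t < s → v t ≤ u s

namespace InterlacedOn

variable {ι α : Type*} {u v : ι → α} {S : Set ι}

theorem monotoneOn_left [PartialOrder ι] [Preorder α] (h : InterlacedOn u v S) : MonotoneOn u S :=
  monotoneOn_iff_forall_lt.2 fun t ht s hs hts => (h.le t ht).trans (h.le_of_lt t ht s hs hts)

theorem monotoneOn_right [PartialOrder ι] [Preorder α] (h : InterlacedOn u v S) : MonotoneOn v S :=
  monotoneOn_iff_forall_lt.2 fun t ht s hs hts => (h.le_of_lt t ht s hs hts).trans (h.le s hs)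

theorem pairwiseDisjoint_Ioo [LinearOrder ι] [Preorder α] (h : InterlacedOn u v S) :
    S.PairwiseDisjoint fun t => Ioo (u t) (v t) := by
  have disjoint_of_lt : ∀ t ∈ S, ∀ s ∈ S, t < s → Disjoint (Ioo (u t) (v t)) (Ioo (u s) (v s)) :=
    fun t ht s hs hts => Set.disjoint_left.2 fun _ hrt hrs =>
      (hrt.2.trans_le (h.le_of_lt t ht s hs hts)).not_gt hrs.1
  intro t ht s hs hne
  rcases hne.lt_or_gt with hts | hst
  · exact disjoint_of_lt t ht s hs hts
  · exact (disjoint_of_lt s hs t ht hst).symm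

theorem countable_setOf_ne [LinearOrder ι] [LinearOrder α] [DenselyOrdered α] [TopologicalSpace α]
    [OrderClosedTopology α] [TopologicalSpace.SeparableSpace α] (h : InterlacedOn u v S) :
    {t ∈ S | u t ≠ v t}.Countable :=
  (h.pairwiseDisjoint_Ioo.subset fun _ ht => ht.1).countable_of_isOpen
    (fun _ _ => isOpen_Ioo) fun t ht => nonempty_Ioo.2 ((h.le t ht.1).lt_of_ne ht.2)

end InterlacedOn

theorem le_of_isMinOn_add_mul {α R : Type*} [CommRing R] [LinearOrder R] [IsStrictOrderedRing R]
    {f g : α → R} {S : Set α} {a b : R} {y z : α} (hba : b < a) (hyS : y ∈ S) (hzS : z ∈ S)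
    (hy : IsMinOn (fun w => f w + a * g w) S y) (hz : IsMinOn (fun w => f w + b * g w) S z) :
    g y ≤ g z := by
  have hyz : f y + a * g y ≤ f z + a * g z := hy hzS
  have hzy : f z + b * g z ≤ f y + b * g y := hz hyS
  have hsum : (a - b) * g y ≤ (a - b) * g z := by linarith
  exact le_of_mul_le_mul_left hsum (sub_pos.2 hba)

section Minimizers

variable {X : Type*} [MetricSpace X] {f : X → ℝ} {x y z : X} {t s : ℝ}

theorem mem_minSet_iff_isMinOn :
    y ∈ minSet f t x ↔ IsMinOn (fun w => f w + (2 * t)⁻¹ * dist x w ^ 2) univ y := by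
  simp only [minSet, mem_ofPred_eq, isMinOn_univ_iff, div_eq_inv_mul]

theorem minSet_nonempty_of_lowerSemicontinuous [CompactSpace X] [Nonempty X]
    (hf : LowerSemicontinuous f) (t : ℝ) (x : X) : (minSet f t x).Nonempty := by
  have hpenalty : Continuous fun w => (2 * t)⁻¹ * dist x w ^ 2 := by fun_prop
  obtain ⟨y, -, hy⟩ := ((hf.add hpenalty.lowerSemicontinuous).lowerSemicontinuousOn
    univ).exists_isMinOn univ_nonempty isCompact_univ
  exact ⟨y, mem_minSet_iff_isMinOn.2 hy⟩

theorem dist_le_dist_of_mem_minSet (ht : 0 < t) (hts : t < s) (hy : y ∈ minSet f t x)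
    (hz : z ∈ minSet f s x) : dist x y ≤ dist x z := by
  have hinv : (2 * s)⁻¹ < (2 * t)⁻¹ := inv_strictAnti₀ (by positivity) (by linarith)
  have hsq : dist x y ^ 2 ≤ dist x z ^ 2 :=
    le_of_isMinOn_add_mul (g := fun w => dist x w ^ 2) hinv (mem_univ y) (mem_univ z)
      (mem_minSet_iff_isMinOn.1 hy) (mem_minSet_iff_isMinOn.1 hz)
  exact le_of_sq_le_sq hsq dist_nonneg

theorem bddBelow_dist_image (x : X) (A : Set X) : BddBelow (dist x '' A) :=
  ⟨0, forall_mem_image.2 fun _ _ => dist_nonneg⟩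

theorem bddAbove_dist_image_minSet (ht : 0 < t) (hts : t < s) (hs : (minSet f s x).Nonempty) :
    BddAbove (dist x '' minSet f t x) := by
  obtain ⟨z, hz⟩ := hs
  exact ⟨dist x z, forall_mem_image.2 fun _ hy => dist_le_dist_of_mem_minSet ht hts hy hz⟩

theorem Dminus_le_Dplus (ht : 0 ≤ t) (hts : t < s) (hs : (minSet f s x).Nonempty) :
    Dminus f x t ≤ Dplus f x t := by
  rcases ht.eq_or_lt with rfl | ht
  · simp only [Dminus, Dplus, if_true, le_refl]
  · simp only [Dminus, Dplus, if_neg ht.ne']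
    -- The later minimizer rules out an unbounded set of distances, whose `sSup` would be `0`.
    exact Real.sInf_le_sSup _ (bddBelow_dist_image x _) (bddAbove_dist_image_minSet ht hts hs)

theorem Dplus_le_dist_of_mem_minSet (ht : 0 ≤ t) (hts : t < s) (hz : z ∈ minSet f s x) :
    Dplus f x t ≤ dist x z := by
  rcases ht.eq_or_lt with rfl | ht
  · simp only [Dplus, if_true, dist_nonneg]
  · rw [Dplus, if_neg ht.ne']
    exact Real.sSup_le
      (forall_mem_image.2 fun _ hy => dist_le_dist_of_mem_minSet ht hts hy hz) dist_nonneg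

theorem Dplus_le_Dminus_of_lt (ht : 0 ≤ t) (hts : t < s) (hs : (minSet f s x).Nonempty) :
    Dplus f x t ≤ Dminus f x s := by
  rw [Dminus, if_neg (ht.trans_lt hts).ne']
  exact le_csInf (hs.image _)
    (forall_mem_image.2 fun _ hz => Dplus_le_dist_of_mem_minSet ht hts hz)

theorem interlacedOn_Dminus_Dplus (hmin : ∀ t : ℝ, 0 < t → (minSet f t x).Nonempty) :
    InterlacedOn (Dminus f x) (Dplus f x) (Ici 0) where
  le t ht := Dminus_le_Dplus ht (lt_add_one t) (hmin _ (add_pos_of_nonneg_of_pos ht one_pos))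
  le_of_lt _ ht s _ hts := Dplus_le_Dminus_of_lt ht hts (hmin s (ht.trans_lt hts))

end Minimizers

theorem stmt0_general {X : Type*} [MetricSpace X] (f : X → ℝ)
    (hmin : ∀ x : X, ∀ t : ℝ, 0 < t → (minSet f t x).Nonempty) :
    (∀ x : X, ∀ t s : ℝ, 0 ≤ t → t < s → Dplus f x t ≤ Dminus f x s) ∧
    (∀ x : X, MonotoneOn (Dplus f x) (Ici 0) ∧ MonotoneOn (Dminus f x) (Ici 0)) ∧
    (∀ x : X, ∃ E : Set ℝ, E.Countable ∧
      ∀ t ∈ Ici (0 : ℝ), t ∉ E → Dplus f x t = Dminus f x t) := by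
  have h (x : X) : InterlacedOn (Dminus f x) (Dplus f x) (Ici 0) :=
    interlacedOn_Dminus_Dplus (hmin x)
  refine ⟨fun x t s ht hts => (h x).le_of_lt t ht s (ht.trans hts.le) hts,
    fun x => ⟨(h x).monotoneOn_right, (h x).monotoneOn_left⟩,
    fun x => ⟨{t ∈ Ici 0 | Dminus f x t ≠ Dplus f x t}, (h x).countable_setOf_ne, ?_⟩⟩
  intro t ht htE
  by_contra hne
  exact htE ⟨ht, Ne.symm hne⟩

/-- **Monotonicity of `D±`** (Proposition 3.1): for a Lipschitz `f` on a compact metric space,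
`D⁺(x,t) ≤ D⁻(x,s)` for `0 ≤ t < s`; hence `D⁺(x,·)`, `D⁻(x,·)` are nondecreasing on `[0,∞)` and
coincide there with at most countably many exceptions. -/
theorem stmt0 {X : Type*} [MetricSpace X] [CompactSpace X] [Nonempty X]
    (f : X → ℝ) (hf : ∃ K : ℝ≥0, LipschitzWith K f) :
    (∀ x : X, ∀ t s : ℝ, 0 ≤ t → t < s → Dplus f x t ≤ Dminus f x s) ∧
    (∀ x : X, MonotoneOn (Dplus f x) (Ici 0) ∧ MonotoneOn (Dminus f x) (Ici 0)) ∧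
    (∀ x : X, ∃ E : Set ℝ, E.Countable ∧
      ∀ t ∈ Ici (0 : ℝ), t ∉ E → Dplus f x t = Dminus f x t) := by
  obtain ⟨K, hK⟩ := hf
  exact stmt0_general f fun x t _ =>
    minSet_nonempty_of_lowerSemicontinuous hK.continuous.lowerSemicontinuous t x
end

section
/- Let (X,d) be a compact metric space and f: X → ℝ a Lipschitz function. Then the function D⁺ is upper semicontinuous and the function D⁻ is lower semicontinuous on X × (0,∞). -/
open Filter Topology Set MeasureTheory
open scoped ENNReal NNReal

/-! `D⁺` and `D⁻` are the extreme values of the distance over the minimizers of the Hopf-Lax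
functional, so their semicontinuity follows from that of the set of minimizers. A non-minimizer `y₀`
at `p₀` is beaten strictly by some competitor `z`, and the same `z` still beats `y` at `p` for
`(p, y)` near `(p₀, y₀)`. By compactness, all minimizers at `p` near `p₀` then lie in any given
neighborhood of the set of minimizers at `p₀`, so passing from `p₀` to `p` can raise the maximal
distance, or lower the minimal one, only by an arbitrarily small amount. -/

section Argmin

/-- The set of minimizers of `g` over the feasible set `K`. It is a set, rather than a chosen
element, so that it can be studied as a set-valued map when `g` depends on a parameter. -/
def argminSet {Y β : Type*} [Preorder β] (g : Y → β) (K : Set Y) : Set Y :=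
  {y ∈ K | IsMinOn g K y}

lemma argminSet_eq_inter_preimage_Iic {Y β : Type*} [Preorder β] {g : Y → β} {K : Set Y} {y₀ : Y}
    (hy₀ : y₀ ∈ argminSet g K) : argminSet g K = K ∩ g ⁻¹' Iic (g y₀) := by
  ext y
  exact ⟨fun hy => ⟨hy.1, hy.2 hy₀.1⟩, fun hy => ⟨hy.1, fun z hz => hy.2.trans (hy₀.2 hz)⟩⟩

variable {P Y β : Type*} [TopologicalSpace P] [TopologicalSpace Y] [LinearOrder β]

lemma argminSet_nonempty {g : Y → β} {K : Set Y} (hK : IsCompact K) (hne : K.Nonempty)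
    (hg : LowerSemicontinuousOn g K) : (argminSet g K).Nonempty :=
  hg.exists_isMinOn hne hK

lemma isCompact_argminSet {g : Y → β} {K : Set Y} (hK : IsCompact K)
    (hg : LowerSemicontinuousOn g K) : IsCompact (argminSet g K) := by
  rcases (argminSet g K).eq_empty_or_nonempty with hempty | ⟨y₀, hy₀⟩
  · rw [hempty]
    exact isCompact_empty
  · rw [argminSet_eq_inter_preimage_Iic hy₀]
    exact hg.isCompact_inter_preimage_Iic hK (g y₀)

lemma eventually_lt_of_upperSemicontinuousAt_of_lowerSemicontinuousAt {u v : P → β} {p₀ : P}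
    (hu : UpperSemicontinuousAt u p₀) (hv : LowerSemicontinuousAt v p₀) (h : u p₀ < v p₀) :
    ∀ᶠ p in 𝓝 p₀, u p < v p := by
  obtain ⟨a, hua, b, hbv, hab⟩ := h.exists_disjoint_Iio_Ioi
  filter_upwards [hu a hua, hv b hbv] with p hpa hpb using hab _ hpa _ hpb

lemma eventually_notMem_argminSet {F : P → Y → β} {K : Set Y} {p₀ : P} {y₀ : Y}
    (hlsc : LowerSemicontinuousAt (Function.uncurry F) (p₀, y₀))
    (husc : ∀ z ∈ K, UpperSemicontinuousAt (F · z) p₀) (hy₀K : y₀ ∈ K)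
    (hy₀ : y₀ ∉ argminSet (F p₀) K) :
    ∀ᶠ q : P × Y in 𝓝 (p₀, y₀), q.2 ∉ argminSet (F q.1) K := by
  obtain ⟨z, hzK, hz⟩ : ∃ z ∈ K, F p₀ z < F p₀ y₀ := by
    simpa [argminSet, isMinOn_iff, hy₀K] using hy₀
  have hcompetitor : UpperSemicontinuousAt (fun q : P × Y => F q.1 z) (p₀, y₀) :=
    UpperSemicontinuousAt.comp (f := (F · z)) (husc z hzK) continuousAt_fst
  filter_upwards [eventually_lt_of_upperSemicontinuousAt_of_lowerSemicontinuousAt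
    hcompetitor hlsc hz] with q hq hmem
  exact (hmem.2 hzK).not_gt hq

theorem upperHemicontinuousAt_argminSet {F : P → Y → β} {K : Set Y} {p₀ : P} (hK : IsCompact K)
    (hlsc : ∀ y ∈ K, LowerSemicontinuousAt (Function.uncurry F) (p₀, y))
    (husc : ∀ z ∈ K, UpperSemicontinuousAt (F · z) p₀) :
    UpperHemicontinuousAt (fun p => argminSet (F p) K) p₀ := by
  refine .of_forall_isOpen fun U hU hsub => ?_
  have hlocal : ∀ y ∈ K, ∀ᶠ q : P × Y in 𝓝 (p₀, y), q.2 ∈ argminSet (F q.1) K → q.2 ∈ U := by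
    intro y hyK
    by_cases hy : y ∈ argminSet (F p₀) K
    · filter_upwards [continuousAt_snd.eventually (hU.mem_nhds (hsub hy))] with q hqU _ using hqU
    · filter_upwards [eventually_notMem_argminSet (hlsc y hyK) husc hyK hy] with q hq hmem
      exact absurd hmem hq
  have hnear : ∀ᶠ p in 𝓝 p₀, ∀ y ∈ K, y ∈ argminSet (F p) K → y ∈ U :=
    hK.eventually_forall_of_forall_eventually hlocal
  filter_upwards [hnear] with p hp y hy using hp y hy.1 hy

end Argmin

section OptimalValue

variable {P Y γ : Type*} [TopologicalSpace P] [TopologicalSpace Y]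
  [ConditionallyCompleteLinearOrder γ] [DenselyOrdered γ]
  {S : P → Set Y} {g : P → Y → γ} {p₀ : P}

theorem upperSemicontinuousAt_sSup_image (hS : UpperHemicontinuousAt S p₀)
    (hcpt : IsCompact (S p₀)) (hne : ∀ᶠ p in 𝓝 p₀, (S p).Nonempty)
    (hg : ∀ y ∈ S p₀, UpperSemicontinuousAt (Function.uncurry g) (p₀, y)) :
    UpperSemicontinuousAt (fun p => sSup (g p '' S p)) p₀ := by
  intro c hc
  obtain ⟨b, hb, hbc⟩ := exists_between hc
  have : Nonempty γ := ⟨c⟩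
  have hbdd : BddAbove (g p₀ '' S p₀) :=
    UpperSemicontinuousOn.bddAbove_of_isCompact hcpt fun y hy =>
      ((hg y hy).comp (g := (p₀, ·)) (by fun_prop)).upperSemicontinuousWithinAt _
  have hnear : {q : P × Y | g q.1 q.2 < b} ∈ 𝓝 p₀ ×ˢ 𝓝ˢ (S p₀) :=
    hcpt.mem_prod_nhdsSet_of_forall fun y hy => by
      rw [← nhds_prod_eq]
      exact hg y hy b ((le_csSup hbdd (mem_image_of_mem _ hy)).trans_lt hb)
  obtain ⟨V, hV, T, hT, hVT⟩ := mem_prod_iff.mp hnear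
  filter_upwards [hV, hS T hT, hne] with p hpV hpT hpne
  refine (csSup_le (hpne.image _) ?_).trans_lt hbc
  rintro _ ⟨y, hy, rfl⟩
  exact (hVT (mk_mem_prod hpV (subset_of_mem_nhdsSet hpT hy))).le

theorem lowerSemicontinuousAt_sInf_image (hS : UpperHemicontinuousAt S p₀)
    (hcpt : IsCompact (S p₀)) (hne : ∀ᶠ p in 𝓝 p₀, (S p).Nonempty)
    (hg : ∀ y ∈ S p₀, LowerSemicontinuousAt (Function.uncurry g) (p₀, y)) :
    LowerSemicontinuousAt (fun p => sInf (g p '' S p)) p₀ :=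
  upperSemicontinuousAt_sSup_image (γ := γᵒᵈ) hS hcpt hne hg

end OptimalValue

section HopfLax

/-- The functional `y ↦ f y + d(x,y)²/(2t)` minimized in the Hopf-Lax formula. The pair `(x, t)`
is a single variable because semicontinuity is joint in `x` and `t`. -/
noncomputable def hopfLaxCost {X : Type*} [PseudoMetricSpace X] (f : X → ℝ) (p : X × ℝ) (y : X) :
    ℝ :=
  f y + dist p.1 y ^ 2 / (2 * p.2)

lemma lowerSemicontinuousAt_uncurry_hopfLaxCost {X : Type*} [PseudoMetricSpace X] {f : X → ℝ}
    {p : X × ℝ} {y : X} (hf : LowerSemicontinuousAt f y) (hp : p.2 ≠ 0) :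
    LowerSemicontinuousAt (Function.uncurry (hopfLaxCost f)) (p, y) := by
  have hdist : ContinuousAt (fun q : (X × ℝ) × X => dist q.1.1 q.2 ^ 2 / (2 * q.1.2)) (p, y) :=
    ContinuousAt.div (by fun_prop) (by fun_prop) (mul_ne_zero two_ne_zero hp)
  exact LowerSemicontinuousAt.add (LowerSemicontinuousAt.comp hf continuousAt_snd)
    hdist.lowerSemicontinuousAt

lemma continuousAt_hopfLaxCost_left {X : Type*} [PseudoMetricSpace X] (f : X → ℝ) {p : X × ℝ}
    (hp : p.2 ≠ 0) (z : X) : ContinuousAt (hopfLaxCost f · z) p :=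
  continuousAt_const.add <|
    ContinuousAt.div (by fun_prop) (by fun_prop) (mul_ne_zero two_ne_zero hp)

lemma lowerSemicontinuous_hopfLaxCost {X : Type*} [PseudoMetricSpace X] {f : X → ℝ}
    (hf : LowerSemicontinuous f) (p : X × ℝ) : LowerSemicontinuous (hopfLaxCost f p) :=
  hf.add (Continuous.lowerSemicontinuous (by fun_prop))

variable {X : Type*} [MetricSpace X] {f : X → ℝ}

lemma minSet_eq_argminSet (f : X → ℝ) (p : X × ℝ) :
    minSet f p.2 p.1 = argminSet (hopfLaxCost f p) univ := by
  ext y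
  simp [minSet, argminSet, hopfLaxCost, isMinOn_iff]

variable [CompactSpace X]

lemma minSet_nonempty (hf : LowerSemicontinuous f) (p : X × ℝ) : (minSet f p.2 p.1).Nonempty := by
  rw [minSet_eq_argminSet]
  exact argminSet_nonempty isCompact_univ ⟨p.1, mem_univ _⟩
    ((lowerSemicontinuous_hopfLaxCost hf p).lowerSemicontinuousOn _)

lemma isCompact_minSet (hf : LowerSemicontinuous f) (p : X × ℝ) : IsCompact (minSet f p.2 p.1) := by
  rw [minSet_eq_argminSet]
  exact isCompact_argminSet isCompact_univ
    ((lowerSemicontinuous_hopfLaxCost hf p).lowerSemicontinuousOn _)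

lemma upperHemicontinuousAt_minSet (hf : LowerSemicontinuous f) {p : X × ℝ} (hp : p.2 ≠ 0) :
    UpperHemicontinuousAt (fun q : X × ℝ => minSet f q.2 q.1) p := by
  simp only [minSet_eq_argminSet]
  exact upperHemicontinuousAt_argminSet isCompact_univ
    (fun y _ => lowerSemicontinuousAt_uncurry_hopfLaxCost (hf y) hp)
    fun z _ => (continuousAt_hopfLaxCost_left f hp z).upperSemicontinuousAt

theorem upperSemicontinuousOn_dplus (hf : LowerSemicontinuous f) :
    UpperSemicontinuousOn (fun p : X × ℝ => Dplus f p.1 p.2) {p | p.2 ≠ 0} := by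
  intro p hp
  have hsup : UpperSemicontinuousAt (fun q : X × ℝ => sSup (dist q.1 '' minSet f q.2 q.1)) p :=
    upperSemicontinuousAt_sSup_image (g := fun q : X × ℝ => dist q.1)
      (upperHemicontinuousAt_minSet hf hp) (isCompact_minSet hf p)
      (.of_forall (minSet_nonempty hf))
      fun y _ => ContinuousAt.upperSemicontinuousAt (by fun_prop)
  refine (hsup.upperSemicontinuousWithinAt _).congr_of_eventuallyEq hp ?_
  filter_upwards [self_mem_nhdsWithin] with q hq using (if_neg hq).symm

theorem lowerSemicontinuousOn_dminus (hf : LowerSemicontinuous f) :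
    LowerSemicontinuousOn (fun p : X × ℝ => Dminus f p.1 p.2) {p | p.2 ≠ 0} := by
  intro p hp
  have hinf : LowerSemicontinuousAt (fun q : X × ℝ => sInf (dist q.1 '' minSet f q.2 q.1)) p :=
    lowerSemicontinuousAt_sInf_image (g := fun q : X × ℝ => dist q.1)
      (upperHemicontinuousAt_minSet hf hp) (isCompact_minSet hf p)
      (.of_forall (minSet_nonempty hf))
      fun y _ => ContinuousAt.lowerSemicontinuousAt (by fun_prop)
  refine (hinf.lowerSemicontinuousWithinAt _).congr_of_eventuallyEq hp ?_
  filter_upwards [self_mem_nhdsWithin] with q hq using (if_neg hq).symm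

end HopfLax

theorem stmt1_general {X : Type*} [MetricSpace X] [CompactSpace X] {f : X → ℝ}
    (hf : LowerSemicontinuous f) :
    UpperSemicontinuousOn (fun p : X × ℝ => Dplus f p.1 p.2) {p : X × ℝ | p.2 ≠ 0} ∧
    LowerSemicontinuousOn (fun p : X × ℝ => Dminus f p.1 p.2) {p : X × ℝ | p.2 ≠ 0} :=
  ⟨upperSemicontinuousOn_dplus hf, lowerSemicontinuousOn_dminus hf⟩

/-- **Semicontinuity of `D±`** (Proposition 3.2): for a Lipschitz `f` on a compact metric
space, `D⁺` is upper semicontinuous and `D⁻` is lower semicontinuous on `X × (0,∞)`. -/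
theorem stmt1 {X : Type*} [MetricSpace X] [CompactSpace X] [Nonempty X]
    (f : X → ℝ) (hf : ∃ K : ℝ≥0, LipschitzWith K f) :
    UpperSemicontinuousOn (fun p : X × ℝ => Dplus f p.1 p.2) {p : X × ℝ | 0 < p.2} ∧
    LowerSemicontinuousOn (fun p : X × ℝ => Dminus f p.1 p.2) {p : X × ℝ | 0 < p.2} := by
  obtain ⟨K, hK⟩ := hf
  exact (stmt1_general hK.continuous.lowerSemicontinuous).imp
    (·.mono fun _ ht => ne_of_gt ht) (·.mono fun _ ht => ne_of_gt ht)
end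

section
/- Let (X,d) be a compact metric space and f: X → ℝ a Lipschitz function. Then the map t ↦ Q_t f is Lipschitz from [0,∞) into C(X) endowed with the sup norm and, for every x ∈ X, the derivative (d/dt) Q_t f(x) exists and equals −[D⁺(x,t)]²/(2t²) = −[D⁻(x,t)]²/(2t²) for every t ∈ (0,∞) with at most countably many exceptions. -/
open Filter Topology Set MeasureTheory
open scoped ENNReal NNReal

/-!
In the variable `u = 1/t`, the function `Q_t f(x) = min_y (f(y) + u d(x,y)²/2)` is a minimum of
affine functions, and `d(x,y)²/2` is a supergradient of it at `u` for every minimizer `y`.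
A selection of supergradients is antitone, so it is continuous off a countable set; where it is
continuous, the function is differentiable and its supergradient is unique. Hence there all
minimizers lie at the same distance from `x`, that is `D⁺ = D⁻`, and the chain rule gives the
derivative in `t`.

For the Lipschitz bound, let `K` be a Lipschitz constant of `f` and `s ≤ t`. A competitor `y` in
`Q_t f(x)` with `d(x,y) < 2Ks` is, up to `2K²(t - s)`, as good a competitor in `Q_s f(x)`. For a
farther `y`, the term `d(x,y)²/(2t)` makes up for `f(x) - f(y) ≤ K d(x,y)` up to `2K²(t - s)`, so
that `y` can be replaced by `x` itself.
-/

section Supergradient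

/-- The number `g` is a supergradient of `φ` at `u` relative to `s`: on `s`, the graph of `φ` lies
below the line of slope `g` through `(u, φ u)`. The point `u` itself need not lie in `s`. -/
def IsSupergradientWithin (φ : ℝ → ℝ) (s : Set ℝ) (g u : ℝ) : Prop :=
  ∀ v ∈ s, φ v ≤ φ u + g * (v - u)

namespace IsSupergradientWithin

variable {φ g : ℝ → ℝ} {s : Set ℝ} {c φ' u : ℝ}

theorem eq_of_hasDerivAt (h : IsSupergradientWithin φ s c u) (hs : s ∈ 𝓝 u)
    (hφ : HasDerivAt φ φ' u) : c = φ' := by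
  have hmax : IsLocalMax (fun v => φ v - c * v) u := by
    filter_upwards [hs] with v hv
    linarith [h v hv]
  have hderiv : HasDerivAt (fun v => φ v - c * v) (φ' - c) u := by
    simpa only [mul_one] using hφ.fun_sub ((hasDerivAt_id' u).const_mul c)
  linarith [hmax.hasDerivAt_eq_zero hderiv]

theorem antitoneOn (h : ∀ u ∈ s, IsSupergradientWithin φ s (g u) u) : AntitoneOn g s := by
  intro u hu v hv huv
  rcases huv.eq_or_lt with rfl | hlt
  · exact le_rfl
  · refine le_of_mul_le_mul_right ?_ (sub_pos.2 hlt)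
    linarith [h u hu v hv, h v hv u hu]

theorem hasDerivAt_of_continuousAt (h : ∀ u ∈ s, IsSupergradientWithin φ s (g u) u) (hs : s ∈ 𝓝 u)
    (hg : ContinuousAt g u) : HasDerivAt φ (g u) u := by
  have hu : u ∈ s := mem_of_mem_nhds hs
  have hlittle : (fun v => (g v - g u) * (v - u)) =o[𝓝 u] fun v => v - u := by
    have hzero : Tendsto (fun v => g v - g u) (𝓝 u) (𝓝 0) := tendsto_sub_nhds_zero_iff.2 hg
    simpa using ((Asymptotics.isLittleO_one_iff ℝ).2 hzero).mul_isBigO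
      (Asymptotics.isBigO_refl (fun v => v - u) (𝓝 u))
  rw [hasDerivAt_iff_isLittleO]
  refine Asymptotics.IsBigO.trans_isLittleO (Asymptotics.IsBigO.of_bound' ?_) hlittle
  filter_upwards [hs] with v hv
  have hupper : φ v - φ u - (v - u) * g u ≤ 0 := by linarith [h u hu v hv]
  have hlower : (g v - g u) * (v - u) ≤ φ v - φ u - (v - u) * g u := by linarith [h v hv u hu]
  simpa only [smul_eq_mul, Real.norm_eq_abs] using abs_le_abs_of_nonpos hupper hlower

theorem countable_not_hasDerivAt (hs : IsOpen s)
    (h : ∀ u ∈ s, IsSupergradientWithin φ s (g u) u) :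
    {u ∈ s | ¬HasDerivAt φ (g u) u}.Countable := by
  refine (antitoneOn h).countable_not_continuousWithinAt.mono ?_
  rintro u ⟨hu, hderiv⟩
  exact ⟨hu, fun hg => hderiv <|
    hasDerivAt_of_continuousAt h (hs.mem_nhds hu) (hg.continuousAt (hs.mem_nhds hu))⟩

end IsSupergradientWithin

end Supergradient

section QuadraticBounds

variable {K d s t : ℝ}

theorem mul_le_sq_div_add (hK : 0 ≤ K) (ht : 0 < t) (hd : 2 * K * s ≤ d) :
    K * d ≤ d ^ 2 / (2 * t) + 2 * K ^ 2 * (t - s) := by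
  have hsq : K * d * (2 * t) ≤ d ^ 2 + 2 * K ^ 2 * (t - s) * (2 * t) := by
    linarith [sq_nonneg (d - 2 * K * t), mul_nonneg (mul_nonneg hK ht.le) (sub_nonneg.2 hd)]
  rwa [← mul_le_mul_iff_left₀ (by positivity : 0 < 2 * t), add_mul,
    div_mul_cancel₀ _ (by positivity)]

theorem sq_div_le_sq_div_add (hd₀ : 0 ≤ d) (hs : 0 < s) (hst : s ≤ t) (hd : d ≤ 2 * K * s) :
    d ^ 2 / (2 * s) ≤ d ^ 2 / (2 * t) + 2 * K ^ 2 * (t - s) := by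
  have ht : 0 < t := hs.trans_le hst
  have hsq : d ^ 2 ≤ 2 * K ^ 2 * (2 * s * t) :=
    calc d ^ 2 ≤ (2 * K * s) ^ 2 := by gcongr
      _ = 4 * K ^ 2 * (s * s) := by ring
      _ ≤ 4 * K ^ 2 * (s * t) := by gcongr
      _ = 2 * K ^ 2 * (2 * s * t) := by ring
  have hdiff : d ^ 2 / (2 * s) - d ^ 2 / (2 * t) = d ^ 2 / (2 * s * t) * (t - s) := by
    field_simp
  have hslope : d ^ 2 / (2 * s * t) * (t - s) ≤ 2 * K ^ 2 * (t - s) :=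
    mul_le_mul_of_nonneg_right ((div_le_iff₀ (by positivity)).2 hsq) (sub_nonneg.2 hst)
  linarith

end QuadraticBounds

section HopfLax

variable {X : Type*} [MetricSpace X] {f : X → ℝ} {K : ℝ≥0} {s t : ℝ} {x y : X}

theorem HL_zero (f : X → ℝ) (x : X) : HL f 0 x = f x :=
  if_pos rfl

theorem HL_of_ne_zero (ht : t ≠ 0) (f : X → ℝ) (x : X) :
    HL f t x = ⨅ y : X, (f y + dist x y ^ 2 / (2 * t)) :=
  if_neg ht

theorem HL_le_of_bddBelow (ht : t ≠ 0)
    (hbdd : BddBelow (range fun z => f z + dist x z ^ 2 / (2 * t))) (y : X) :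
    HL f t x ≤ f y + dist x y ^ 2 / (2 * t) :=
  (HL_of_ne_zero ht f x).trans_le (ciInf_le hbdd y)

theorem HL_eq_of_mem_minSet (ht : t ≠ 0) (hy : y ∈ minSet f t x) :
    HL f t x = f y + dist x y ^ 2 / (2 * t) := by
  have : Nonempty X := ⟨y⟩
  refine le_antisymm (HL_le_of_bddBelow ht ⟨_, forall_mem_range.2 hy⟩ y) ?_
  rw [HL_of_ne_zero ht]
  exact le_ciInf hy

theorem bddBelow_range_add_dist_sq_div (hf : LipschitzWith K f) (ht : 0 < t) (x : X) :
    BddBelow (range fun y => f y + dist x y ^ 2 / (2 * t)) := by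
  refine ⟨f x - 2 * K ^ 2 * t, forall_mem_range.2 fun y => ?_⟩
  have hquad : K * dist x y ≤ dist x y ^ 2 / (2 * t) + 2 * K ^ 2 * (t - 0) :=
    mul_le_sq_div_add K.coe_nonneg ht (by simp)
  linarith [hf.le_add_mul x y]

theorem HL_le_self (hf : LipschitzWith K f) (ht : 0 ≤ t) (x : X) : HL f t x ≤ f x := by
  rcases ht.eq_or_lt with rfl | ht
  · exact (HL_zero f x).le
  · simpa using HL_le_of_bddBelow ht.ne' (bddBelow_range_add_dist_sq_div hf ht x) x

theorem antitoneOn_HL (hf : LipschitzWith K f) (x : X) :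
    AntitoneOn (fun t => HL f t x) (Ici 0) := by
  intro s hs t ht hst
  have : Nonempty X := ⟨x⟩
  rcases (mem_Ici.1 hs).eq_or_lt with rfl | hs
  · simpa only [HL_zero] using HL_le_self hf ht x
  · have ht : 0 < t := hs.trans_le hst
    simp only [HL_of_ne_zero hs.ne', HL_of_ne_zero ht.ne']
    exact ciInf_mono (bddBelow_range_add_dist_sq_div hf ht x) fun y => by gcongr

theorem HL_le_HL_add (hf : LipschitzWith K f) (hs : 0 ≤ s) (hst : s ≤ t) (x : X) :
    HL f s x ≤ HL f t x + 2 * K ^ 2 * (t - s) := by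
  rcases hst.eq_or_lt with rfl | hlt
  · simp
  have : Nonempty X := ⟨x⟩
  have ht : 0 < t := hs.trans_lt hlt
  rw [← sub_le_iff_le_add, HL_of_ne_zero ht.ne']
  refine le_ciInf fun y => ?_
  rcases lt_or_ge (dist x y) (2 * K * s) with hnear | hfar
  · have hs : 0 < s := pos_of_mul_pos_right (dist_nonneg.trans_lt hnear) (by positivity)
    linarith [HL_le_of_bddBelow hs.ne' (bddBelow_range_add_dist_sq_div hf hs x) y,
      sq_div_le_sq_div_add dist_nonneg hs hst hnear.le]
  · linarith [HL_le_self hf hs x, hf.le_add_mul x y, mul_le_sq_div_add K.coe_nonneg ht hfar]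

theorem lipschitzOnWith_HL (hf : LipschitzWith K f) (x : X) :
    LipschitzOnWith (2 * K ^ 2) (fun t => HL f t x) (Ici 0) := by
  refine LipschitzOnWith.of_le_add_mul _ fun s hs t ht => ?_
  rcases le_total s t with hst | hts
  · simpa [dist_comm s t, Real.dist_eq, abs_of_nonneg (sub_nonneg.2 hst)] using
      HL_le_HL_add hf hs hst x
  · exact (antitoneOn_HL hf x ht hs hts).trans (le_add_of_nonneg_right (by positivity))

theorem nonempty_minSet [ProperSpace X] (hf : LipschitzWith K f) (ht : 0 < t) (x : X) :
    (minSet f t x).Nonempty := by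
  have hcont : Continuous fun y => f y + dist x y ^ 2 / (2 * t) := by
    have := hf.continuous
    fun_prop
  refine hcont.exists_forall_le' x ?_
  filter_upwards [(isCompact_closedBall x (2 * K * t)).compl_mem_cocompact] with y hy
  have hfar : 2 * K * t ≤ dist x y := by
    rw [mem_compl_iff, Metric.mem_closedBall', not_le] at hy
    exact hy.le
  have hquad := mul_le_sq_div_add K.coe_nonneg ht hfar
  rw [sub_self, mul_zero, add_zero] at hquad
  simpa using (hf.le_add_mul x y).trans (add_le_add_right hquad (f y))

theorem isSupergradientWithin_HL_inv (hmin : ∀ t > 0, (minSet f t x).Nonempty) (ht : 0 < t)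
    (hy : y ∈ minSet f t x) :
    IsSupergradientWithin (fun u => HL f u⁻¹ x) (Ioi 0) (dist x y ^ 2 / 2) t⁻¹ := by
  intro v hv
  obtain ⟨z, hz⟩ := hmin v⁻¹ (inv_pos.2 hv)
  calc HL f v⁻¹ x
      ≤ f y + dist x y ^ 2 / (2 * v⁻¹) :=
        HL_le_of_bddBelow (inv_pos.2 hv).ne' ⟨_, forall_mem_range.2 hz⟩ y
    _ = f y + dist x y ^ 2 / (2 * t) + dist x y ^ 2 / 2 * (v - t⁻¹) := by
        simp only [div_eq_mul_inv, mul_inv, inv_inv]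
        ring
    _ = HL f t⁻¹⁻¹ x + dist x y ^ 2 / 2 * (v - t⁻¹) := by
        rw [inv_inv, HL_eq_of_mem_minSet ht.ne' hy]

theorem image_dist_minSet_eq_singleton (hmin : ∀ t > 0, (minSet f t x).Nonempty) (ht : 0 < t)
    (hy : y ∈ minSet f t x)
    (hderiv : HasDerivAt (fun u => HL f u⁻¹ x) (dist x y ^ 2 / 2) t⁻¹) :
    dist x '' minSet f t x = {dist x y} := by
  refine eq_singleton_iff_unique_mem.2 ⟨mem_image_of_mem _ hy, forall_mem_image.2 fun z hz => ?_⟩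
  have hsq : dist x z ^ 2 / 2 = dist x y ^ 2 / 2 :=
    (isSupergradientWithin_HL_inv hmin ht hz).eq_of_hasDerivAt (Ioi_mem_nhds (inv_pos.2 ht)) hderiv
  exact (sq_eq_sq₀ dist_nonneg dist_nonneg).1 ((div_left_inj' two_ne_zero).1 hsq)

theorem Dplus_eq_of_image_dist_eq_singleton (ht : t ≠ 0) {r : ℝ}
    (h : dist x '' minSet f t x = {r}) : Dplus f x t = r := by
  rw [Dplus, if_neg ht, h, csSup_singleton]

theorem Dminus_eq_of_image_dist_eq_singleton (ht : t ≠ 0) {r : ℝ}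
    (h : dist x '' minSet f t x = {r}) : Dminus f x t = r := by
  rw [Dminus, if_neg ht, h, csInf_singleton]

theorem hasDerivAt_HL_of_hasDerivAt_HL_inv (ht : t ≠ 0) {r : ℝ}
    (hderiv : HasDerivAt (fun u => HL f u⁻¹ x) (r ^ 2 / 2) t⁻¹) :
    HasDerivAt (fun τ => HL f τ x) (-r ^ 2 / (2 * t ^ 2)) t := by
  have hcomp : HasDerivAt (fun τ => HL f τ⁻¹⁻¹ x) (r ^ 2 / 2 * -(t ^ 2)⁻¹) t :=
    hderiv.comp t (hasDerivAt_inv ht)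
  simpa only [inv_inv] using hcomp.congr_deriv (by ring : _ = -r ^ 2 / (2 * t ^ 2))

theorem countable_not_Dplus_eq_Dminus_and_hasDerivAt_HL (hmin : ∀ t > 0, (minSet f t x).Nonempty) :
    {t ∈ Ioi (0 : ℝ) | ¬(Dplus f x t = Dminus f x t ∧
      HasDerivAt (fun τ => HL f τ x) (-(Dplus f x t) ^ 2 / (2 * t ^ 2)) t)}.Countable := by
  have : Nonempty X := ⟨x⟩
  choose! y hy using hmin
  have hmin : ∀ t > 0, (minSet f t x).Nonempty := fun t ht => ⟨y t, hy t ht⟩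
  have hsuper : ∀ u ∈ Ioi (0 : ℝ), IsSupergradientWithin (fun u => HL f u⁻¹ x) (Ioi 0)
      (dist x (y u⁻¹) ^ 2 / 2) u := fun u hu => by
    simpa only [inv_inv] using
      isSupergradientWithin_HL_inv hmin (inv_pos.2 hu) (hy u⁻¹ (inv_pos.2 hu))
  refine ((IsSupergradientWithin.countable_not_hasDerivAt isOpen_Ioi hsuper).preimage
    inv_injective).mono ?_
  rintro t ⟨ht, hexceptional⟩
  refine ⟨mem_Ioi.2 (inv_pos.2 ht), fun hderiv => hexceptional ?_⟩
  rw [inv_inv] at hderiv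
  have hdist := image_dist_minSet_eq_singleton hmin ht (hy t ht) hderiv
  have hplus : Dplus f x t = dist x (y t) := Dplus_eq_of_image_dist_eq_singleton (ne_of_gt ht) hdist
  have hminus : Dminus f x t = dist x (y t) :=
    Dminus_eq_of_image_dist_eq_singleton (ne_of_gt ht) hdist
  exact ⟨hplus.trans hminus.symm, hplus ▸ hasDerivAt_HL_of_hasDerivAt_HL_inv (ne_of_gt ht) hderiv⟩

end HopfLax

theorem stmt2_general {X : Type*} [MetricSpace X] [ProperSpace X]
    (f : X → ℝ) (hf : ∃ K : ℝ≥0, LipschitzWith K f) :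
    (∃ L : ℝ, 0 ≤ L ∧ ∀ t ∈ Ici (0 : ℝ), ∀ s ∈ Ici (0 : ℝ), ∀ x : X,
        |HL f s x - HL f t x| ≤ L * |s - t|) ∧
    (∀ x : X, ∃ E : Set ℝ, E.Countable ∧ ∀ t ∈ Ioi (0 : ℝ), t ∉ E →
        Dplus f x t = Dminus f x t ∧
        HasDerivAt (fun τ : ℝ => HL f τ x) (-(Dplus f x t) ^ 2 / (2 * t ^ 2)) t) := by
  obtain ⟨K, hK⟩ := hf
  refine ⟨⟨2 * K ^ 2, by positivity, fun t ht s hs x => ?_⟩, fun x => ?_⟩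
  · exact (lipschitzOnWith_HL hK x).dist_le_mul s hs t ht
  · have hmin : ∀ t > 0, (minSet f t x).Nonempty := fun t ht => nonempty_minSet hK ht x
    exact ⟨_, countable_not_Dplus_eq_Dminus_and_hasDerivAt_HL hmin,
      fun t ht hE => not_not.1 fun h => hE ⟨ht, h⟩⟩

/-- **Time derivative of `Q_t f`** (Proposition 3.3): the map `t ↦ Q_t f` is Lipschitz from
`[0,∞)` to `C(X)` with the sup norm, and for every `x` the derivative
`(d/dt) Q_t f (x) = -[D⁺(x,t)]²/(2t²) = -[D⁻(x,t)]²/(2t²)` exists for all `t ∈ (0,∞)` with at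
most countably many exceptions. -/
theorem stmt2 {X : Type*} [MetricSpace X] [CompactSpace X] [Nonempty X]
    (f : X → ℝ) (hf : ∃ K : ℝ≥0, LipschitzWith K f) :
    (∃ L : ℝ, 0 ≤ L ∧ ∀ t ∈ Ici (0 : ℝ), ∀ s ∈ Ici (0 : ℝ), ∀ x : X,
        |HL f s x - HL f t x| ≤ L * |s - t|) ∧
    (∀ x : X, ∃ E : Set ℝ, E.Countable ∧ ∀ t ∈ Ioi (0 : ℝ), t ∉ E →
        Dplus f x t = Dminus f x t ∧
        HasDerivAt (fun τ : ℝ => HL f τ x) (-(Dplus f x t) ^ 2 / (2 * t ^ 2)) t) :=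
  stmt2_general f hf
end

section
/- Let (X,d,m) be a compact normalized metric measure space and let γ ∈ P(X×X) have bounded deformation, i.e. c·m ≤ π¹_♯γ ≤ C·m and c·m ≤ π²_♯γ ≤ C·m for some constants 0 < c ≤ C < ∞. Then γ_♯μ ∈ D(Ent_m) for every μ ∈ D(Ent_m), and the map μ ↦ Ent_m(μ) − Ent_m(γ_♯μ) is convex on D(Ent_m) with respect to linear interpolation of measures: for all μ₀, μ₁ ∈ D(Ent_m) and t ∈ [0,1], with μ_t := (1−t)μ₀ + tμ₁, one has Ent_m(μ_t) − Ent_m(γ_♯μ_t) ≤ (1−t)(Ent_m(μ₀) − Ent_m(γ_♯μ₀)) + t(Ent_m(μ₁) − Ent_m(γ_♯μ₁)). -/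
open Filter Topology Set MeasureTheory
open scoped ENNReal NNReal

/-- The nonnegative integrand `z log z - z + 1 ≥ 0` used to define the relative entropy:
for probability measures `ρ = f·σ` one has `∫ (f log f - f + 1) dσ = ∫ f log f dσ`. -/
noncomputable def entFun (z : ℝ) : ℝ := z * Real.log z - z + 1

open scoped Classical in
/-- The relative entropy `Ent_σ(ρ) = ∫ f log f dσ` if `ρ = f·σ ≪ σ`, and `+∞` otherwise
(for probability measures `ρ, σ` this agrees with `∫⁻ (f log f - f + 1) dσ ∈ [0,∞]`). -/
noncomputable def Ent {X : Type*} [MeasurableSpace X]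
    (σ ρ : MeasureTheory.Measure X) : ℝ≥0∞ :=
  if ρ ≪ σ then ∫⁻ x, ENNReal.ofReal (entFun ((ρ.rnDeriv σ x).toReal)) ∂σ else ⊤

/-- Push-forward of `μ` via the plan `γ` (Definition 5.3):
`γ_♯μ := π²_♯ γ_μ`, where `dγ_μ(x,y) = (dμ/d(π¹_♯γ))(x) dγ(x,y)`. -/
noncomputable def planPush {X : Type*} [MeasurableSpace X]
    (γ : MeasureTheory.Measure (X × X)) (μ : MeasureTheory.Measure X) :
    MeasureTheory.Measure X :=
  (γ.withDensity (fun p => μ.rnDeriv (γ.map Prod.fst) p.1)).map Prod.snd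

/-!
With `γ_μ` the lift of `μ` to the product space, `fst` maps `γ_μ` to
`μ` and `snd` maps it to `γ_♯μ`. The density of `γ_μ` with respect to `γ_ν` is that of `μ` with
respect to `ν`, precomposed with `fst`, so `klDiv γ_μ γ_ν = klDiv μ ν`, and the data processing
inequality for `snd` gives `klDiv (γ_♯μ) (γ_♯ν) ≤ klDiv μ ν`.

For `ν = π¹_♯γ` this bounds the entropy of `γ_♯μ` relative to `π²_♯γ`, and passing between `m` and
the marginals of `γ` costs only the logarithm of a bound on a density. For convexity, the
compensation identity says that the Jensen gap of `Ent_m` at `μ_t` is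
`(1 - t) klDiv μ₀ μ_t + t klDiv μ₁ μ_t`, which by the above does not increase under the linear map
`γ_♯`.
-/

open InformationTheory

theorem ent_eq_klDiv {X : Type*} [MeasurableSpace X] (σ ρ : Measure X) [IsFiniteMeasure σ]
    [IsFiniteMeasure ρ] : Ent σ ρ = klDiv ρ σ := by
  have entFun_eq_klFun (z : ℝ) : entFun z = klFun z := by rw [entFun, klFun_apply]; ring
  simp only [klDiv_eq_lintegral_klFun, Ent, entFun_eq_klFun]

theorem klFun_mul (r h : ℝ) :
    klFun (r * h) = h * klFun r + r * h * Real.log h + 1 - h := by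
  simp only [klFun_apply]
  rcases eq_or_ne h 0 with rfl | hh
  · simp
  rcases eq_or_ne r 0 with rfl | hr
  · simp
  rw [Real.log_mul hr hh]
  ring

theorem klFun_mul_le {r h K : ℝ} (hr : 0 ≤ r) (hh : 0 ≤ h) (hK : h ≤ K) :
    klFun (r * h) ≤ h * klFun r + Real.posLog K * (r * h) + 1 := by
  have hlog : Real.log h ≤ Real.posLog K :=
    (le_max_right _ _).trans (Real.posLog_le_posLog hh hK)
  have := mul_le_mul_of_nonneg_left hlog (mul_nonneg hr hh)
  rw [klFun_mul]
  linarith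

/-- For densities, `a * r + b * s = 1` is only available where `h ≠ 0`, hence the form of `hh`. -/
theorem klFun_mul_convexComb {a b r s h : ℝ} (hab : a + b = 1)
    (hh : h = a * (r * h) + b * (s * h)) :
    a * klFun (r * h) + b * klFun (s * h)
      = klFun h + (a * (h * klFun r) + b * (h * klFun s)) := by
  rw [klFun_mul r, klFun_mul s, klFun_apply h]
  linear_combination (-Real.log h) * hh + (1 - h) * hab

section Measure

variable {X : Type*} [MeasurableSpace X] {μ ν σ : Measure X}

theorem le_inv_smul_of_smul_le [IsFiniteMeasure ν] {c : ℝ≥0∞} (hc : c ≠ 0) (h : c • μ ≤ ν) :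
    μ ≤ c⁻¹ • ν := by
  refine Measure.le_iff'.2 fun s => ?_
  have hs : μ s * c ≤ ν s := by simpa only [Measure.smul_apply, smul_eq_mul, mul_comm] using h s
  rw [Measure.smul_apply, smul_eq_mul, mul_comm, ← div_eq_mul_inv]
  exact (ENNReal.le_div_iff_mul_le (.inl hc) (.inr (measure_ne_top ν s))).2 hs

theorem rnDeriv_le_of_le_smul [SigmaFinite ν] {C : ℝ≥0∞} (h : μ ≤ C • ν) :
    ∀ᵐ x ∂ν, μ.rnDeriv ν x ≤ C := by
  refine ae_le_of_forall_setLIntegral_le_of_sigmaFinite₀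
    (Measure.measurable_rnDeriv μ ν).aemeasurable fun s _ _ => ?_
  rw [setLIntegral_const]
  exact (Measure.setLIntegral_rnDeriv_le s).trans (h s)

theorem map_withDensity_comp {Y : Type*} [MeasurableSpace Y] {f : X → Y} {g : Y → ℝ≥0∞}
    (hf : Measurable f) (hg : Measurable g) :
    (μ.withDensity (g ∘ f)).map f = (μ.map f).withDensity g := by
  ext s hs
  rw [Measure.map_apply hf hs, withDensity_apply _ (hf hs), withDensity_apply _ hs,
    setLIntegral_map hs hg hf]
  rfl

variable [IsFiniteMeasure μ] [IsFiniteMeasure ν] [IsFiniteMeasure σ]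

theorem ae_toReal_rnDeriv_eq_mul (hμν : μ ≪ ν) :
    ∀ᵐ x ∂σ, (μ.rnDeriv σ x).toReal = (μ.rnDeriv ν x).toReal * (ν.rnDeriv σ x).toReal := by
  filter_upwards [Measure.rnDeriv_mul_rnDeriv (κ := σ) hμν] with x hx
  rw [← hx, Pi.mul_apply, ENNReal.toReal_mul]

theorem klDiv_eq_lintegral_klFun_mul (hμν : μ ≪ ν) (hνσ : ν ≪ σ) :
    klDiv μ σ = ∫⁻ x, ENNReal.ofReal
      (klFun ((μ.rnDeriv ν x).toReal * (ν.rnDeriv σ x).toReal)) ∂σ := by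
  rw [klDiv_eq_lintegral_klFun_of_ac (hμν.trans hνσ)]
  refine lintegral_congr_ae ?_
  filter_upwards [ae_toReal_rnDeriv_eq_mul (σ := σ) hμν] with x hx
  rw [hx]

theorem klDiv_eq_lintegral_mul_klFun (hμν : μ ≪ ν) (hνσ : ν ≪ σ) :
    klDiv μ ν = ∫⁻ x, ENNReal.ofReal
      ((ν.rnDeriv σ x).toReal * klFun (μ.rnDeriv ν x).toReal) ∂σ := by
  rw [klDiv_eq_lintegral_klFun_of_ac hμν, ← lintegral_rnDeriv_mul hνσ (by fun_prop)]
  refine lintegral_congr_ae ?_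
  filter_upwards [Measure.rnDeriv_ne_top ν σ] with x hx
  rw [ENNReal.ofReal_mul ENNReal.toReal_nonneg, ENNReal.ofReal_toReal hx]

theorem klDiv_le_of_le_smul {C : ℝ≥0∞} (hC : C ≠ ⊤) (h : ν ≤ C • σ) :
    klDiv μ σ ≤ klDiv μ ν + ENNReal.ofReal (Real.posLog C.toReal) * μ univ + σ univ := by
  by_cases hμν : μ ≪ ν
  swap
  · simp [hμν]
  have hνσ : ν ≪ σ := Measure.absolutelyContinuous_of_le_smul h
  have hμ : μ univ = ∫⁻ x, ENNReal.ofReal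
      ((μ.rnDeriv ν x).toReal * (ν.rnDeriv σ x).toReal) ∂σ := by
    rw [← Measure.lintegral_rnDeriv (hμν.trans hνσ)]
    refine lintegral_congr_ae ?_
    filter_upwards [ae_toReal_rnDeriv_eq_mul (σ := σ) hμν, Measure.rnDeriv_ne_top μ σ]
      with x hx hx_top
    rw [← hx, ENNReal.ofReal_toReal hx_top]
  rw [klDiv_eq_lintegral_klFun_mul hμν hνσ, klDiv_eq_lintegral_mul_klFun hμν hνσ, hμ,
    ← lintegral_const_mul _ (by fun_prop), ← lintegral_add_left (by fun_prop), ← lintegral_one,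
    ← lintegral_add_right _ measurable_const]
  refine lintegral_mono_ae ?_
  filter_upwards [rnDeriv_le_of_le_smul h] with x hx
  have hkl : 0 ≤ klFun (μ.rnDeriv ν x).toReal := klFun_nonneg ENNReal.toReal_nonneg
  have hlog : 0 ≤ Real.posLog C.toReal := Real.posLog_nonneg
  rw [← ENNReal.ofReal_mul hlog, ← ENNReal.ofReal_one,
    ← ENNReal.ofReal_add, ← ENNReal.ofReal_add]
  · exact ENNReal.ofReal_le_ofReal
      (klFun_mul_le ENNReal.toReal_nonneg ENNReal.toReal_nonneg (ENNReal.toReal_mono hC hx))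
  all_goals positivity

theorem klDiv_ne_top_of_le_smul {C : ℝ≥0∞} (hC : C ≠ ⊤) (h : ν ≤ C • σ)
    (hμν : klDiv μ ν ≠ ⊤) : klDiv μ σ ≠ ⊤ := by
  refine ne_top_of_le_ne_top ?_ (klDiv_le_of_le_smul hC h)
  finiteness

instance isFiniteMeasure_ofReal_smul (a : ℝ) : IsFiniteMeasure (ENNReal.ofReal a • μ) :=
  μ.smul_finite ENNReal.ofReal_ne_top

theorem ae_toReal_rnDeriv_smul_add_smul {a b : ℝ} (ha : 0 ≤ a) (hb : 0 ≤ b) :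
    ∀ᵐ x ∂σ, ((ENNReal.ofReal a • μ + ENNReal.ofReal b • ν).rnDeriv σ x).toReal
      = a * (μ.rnDeriv σ x).toReal + b * (ν.rnDeriv σ x).toReal := by
  filter_upwards [Measure.rnDeriv_add (ENNReal.ofReal a • μ) (ENNReal.ofReal b • ν) σ,
    Measure.rnDeriv_smul_left_of_ne_top μ σ (ENNReal.ofReal_ne_top (r := a)),
    Measure.rnDeriv_smul_left_of_ne_top ν σ (ENNReal.ofReal_ne_top (r := b)),
    Measure.rnDeriv_ne_top μ σ, Measure.rnDeriv_ne_top ν σ] with x hadd hμ hν hμ_top hν_top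
  rw [hadd, Pi.add_apply, hμ, hν, Pi.smul_apply, Pi.smul_apply, smul_eq_mul, smul_eq_mul,
    ENNReal.toReal_add (by finiteness) (by finiteness), ENNReal.toReal_mul, ENNReal.toReal_mul,
    ENNReal.toReal_ofReal ha, ENNReal.toReal_ofReal hb]

theorem klDiv_compensation_identity_of_ac {M : Measure X} {a b : ℝ} (ha : 0 ≤ a) (hb : 0 ≤ b)
    (hab : a + b = 1) (hM : M = ENNReal.ofReal a • μ + ENNReal.ofReal b • ν)
    (hμM : μ ≪ M) (hνM : ν ≪ M) (hMσ : M ≪ σ) :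
    ENNReal.ofReal a * klDiv μ σ + ENNReal.ofReal b * klDiv ν σ
      = klDiv M σ + (ENNReal.ofReal a * klDiv μ M + ENNReal.ofReal b * klDiv ν M) := by
  have : IsFiniteMeasure M := hM ▸ inferInstance
  rw [klDiv_eq_lintegral_klFun_mul hμM hMσ, klDiv_eq_lintegral_klFun_mul hνM hMσ,
    klDiv_eq_lintegral_mul_klFun hμM hMσ, klDiv_eq_lintegral_mul_klFun hνM hMσ,
    klDiv_eq_lintegral_klFun_of_ac hMσ]
  simp only [← lintegral_const_mul' _ _ ENNReal.ofReal_ne_top]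
  rw [← lintegral_add_left (by fun_prop), ← lintegral_add_left (by fun_prop),
    ← lintegral_add_left (by fun_prop)]
  refine lintegral_congr_ae ?_
  filter_upwards [ae_toReal_rnDeriv_eq_mul (σ := σ) hμM,
    ae_toReal_rnDeriv_eq_mul (σ := σ) hνM,
    ae_toReal_rnDeriv_smul_add_smul (μ := μ) (ν := ν) (σ := σ) ha hb] with x hμx hνx hMx
  rw [← hM, hμx, hνx] at hMx
  have hr : 0 ≤ (μ.rnDeriv M x).toReal := ENNReal.toReal_nonneg
  have hs : 0 ≤ (ν.rnDeriv M x).toReal := ENNReal.toReal_nonneg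
  have hh : 0 ≤ (M.rnDeriv σ x).toReal := ENNReal.toReal_nonneg
  have hkr := klFun_nonneg hr
  have hks := klFun_nonneg hs
  have hkh := klFun_nonneg hh
  have hkrh := klFun_nonneg (mul_nonneg hr hh)
  have hksh := klFun_nonneg (mul_nonneg hs hh)
  simp only [← ENNReal.ofReal_mul ha, ← ENNReal.ofReal_mul hb]
  rw [← ENNReal.ofReal_add (by positivity) (by positivity),
    ← ENNReal.ofReal_add (by positivity) (by positivity),
    ← ENNReal.ofReal_add (by positivity) (by positivity), klFun_mul_convexComb hab hMx]

theorem klDiv_compensation_identity {a b : ℝ} (ha : 0 ≤ a) (hb : 0 ≤ b) (hab : a + b = 1) :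
    ENNReal.ofReal a * klDiv μ σ + ENNReal.ofReal b * klDiv ν σ
      = klDiv (ENNReal.ofReal a • μ + ENNReal.ofReal b • ν) σ
        + (ENNReal.ofReal a * klDiv μ (ENNReal.ofReal a • μ + ENNReal.ofReal b • ν)
          + ENNReal.ofReal b * klDiv ν (ENNReal.ofReal a • μ + ENNReal.ofReal b • ν)) := by
  rcases ha.eq_or_lt with rfl | ha_pos
  · obtain rfl : b = 1 := by linarith
    simp
  rcases hb.eq_or_lt with rfl | hb_pos
  · obtain rfl : a = 1 := by linarith
    simp
  have hμM : μ ≪ ENNReal.ofReal a • μ + ENNReal.ofReal b • ν :=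
    (Measure.absolutelyContinuous_smul (ENNReal.ofReal_pos.2 ha_pos).ne').add_right _
  have hνM : ν ≪ ENNReal.ofReal a • μ + ENNReal.ofReal b • ν := by
    rw [add_comm]
    exact (Measure.absolutelyContinuous_smul (ENNReal.ofReal_pos.2 hb_pos).ne').add_right _
  by_cases hMσ : ENNReal.ofReal a • μ + ENNReal.ofReal b • ν ≪ σ
  · exact klDiv_compensation_identity_of_ac ha hb hab rfl hμM hνM hMσ
  have hσ : ¬ (μ ≪ σ ∧ ν ≪ σ) := fun h => hMσ ((h.1.smul_left _).add_left (h.2.smul_left _))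
  rw [klDiv_of_not_ac hMσ, top_add]
  rcases not_and_or.1 hσ with hμσ | hνσ
  · simp [klDiv_of_not_ac hμσ, ENNReal.mul_top, ha_pos]
  · simp [klDiv_of_not_ac hνσ, ENNReal.mul_top, hb_pos]

end Measure

section PlanLift

variable {X Y : Type*} [MeasurableSpace X] [MeasurableSpace Y]

/-- The plan `γ_μ` obtained from `γ` by reweighting its first marginal to `μ`. As in `planPush`,
only the part of `μ` that is absolutely continuous with respect to `γ.fst` is seen. -/
noncomputable def planLift (γ : Measure (X × Y)) (μ : Measure X) : Measure (X × Y) :=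
  γ.withDensity (μ.rnDeriv γ.fst ∘ Prod.fst)

variable {γ : Measure (X × Y)} {μ ν : Measure X}

theorem snd_planLift (γ : Measure (X × X)) (μ : Measure X) :
    (planLift γ μ).snd = planPush γ μ := rfl

theorem planLift_congr {f : X → ℝ≥0∞} (h : μ.rnDeriv γ.fst =ᵐ[γ.fst] f) :
    planLift γ μ = γ.withDensity (f ∘ Prod.fst) :=
  withDensity_congr_ae (ae_of_ae_map measurable_fst.aemeasurable h)

instance [IsFiniteMeasure μ] : IsFiniteMeasure (planLift γ μ) := by
  refine isFiniteMeasure_withDensity ?_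
  have h := lintegral_map (μ := γ) (Measure.measurable_rnDeriv μ γ.fst) measurable_fst
  exact ne_top_of_le_ne_top (measure_ne_top μ univ) (h.symm.trans_le Measure.lintegral_rnDeriv_le)

theorem planLift_fst_self [IsFiniteMeasure γ] : planLift γ γ.fst = γ := by
  rw [planLift_congr (Measure.rnDeriv_self γ.fst)]
  exact withDensity_one

variable [IsFiniteMeasure γ] [IsFiniteMeasure μ] [IsFiniteMeasure ν]

theorem fst_planLift (hμ : μ ≪ γ.fst) : (planLift γ μ).fst = μ :=
  (map_withDensity_comp measurable_fst (Measure.measurable_rnDeriv _ _)).trans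
    (Measure.withDensity_rnDeriv_eq _ _ hμ)

theorem planLift_planLift (hμν : μ ≪ ν) (hν : ν ≪ γ.fst) :
    planLift (planLift γ ν) μ = planLift γ μ := by
  rw [planLift.eq_1 _ μ, fst_planLift hν, planLift,
    ← withDensity_mul _ (by fun_prop) (by fun_prop), mul_comm]
  exact (planLift_congr (Measure.rnDeriv_mul_rnDeriv hμν).symm).symm

theorem klDiv_planLift_self (hμ : μ ≪ γ.fst) : klDiv (planLift γ μ) γ = klDiv μ γ.fst := by
  have hlift : planLift γ μ ≪ γ := withDensity_absolutelyContinuous _ _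
  rw [klDiv_eq_lintegral_klFun_of_ac hlift, klDiv_eq_lintegral_klFun_of_ac hμ, Measure.fst,
    lintegral_map (by fun_prop) measurable_fst]
  refine lintegral_congr_ae ?_
  filter_upwards [Measure.rnDeriv_withDensity γ
    ((Measure.measurable_rnDeriv μ γ.fst).comp measurable_fst)] with p hp
  rw [planLift, hp]
  rfl

theorem klDiv_planLift (hμν : μ ≪ ν) (hν : ν ≪ γ.fst) :
    klDiv (planLift γ μ) (planLift γ ν) = klDiv μ ν := by
  have hfst := fst_planLift hν
  rw [← planLift_planLift hμν hν, klDiv_planLift_self (hfst.symm ▸ hμν), hfst]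

theorem planLift_add : planLift γ (μ + ν) = planLift γ μ + planLift γ ν := by
  rw [planLift_congr (Measure.rnDeriv_add μ ν γ.fst)]
  exact withDensity_add_left (by fun_prop) _

theorem planLift_smul {a : ℝ≥0∞} (ha : a ≠ ⊤) : planLift γ (a • μ) = a • planLift γ μ := by
  rw [planLift_congr (Measure.rnDeriv_smul_left_of_ne_top μ γ.fst ha)]
  exact withDensity_smul' a _ ha

end PlanLift

section PlanPush

variable {X : Type*} [MeasurableSpace X] {γ : Measure (X × X)} {μ ν : Measure X}

instance [IsFiniteMeasure μ] : IsFiniteMeasure (planPush γ μ) :=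
  inferInstanceAs (IsFiniteMeasure (planLift γ μ).snd)

variable [IsFiniteMeasure γ]

theorem planPush_fst : planPush γ γ.fst = γ.snd := by
  rw [← snd_planLift, planLift_fst_self]

variable [IsFiniteMeasure μ] [IsFiniteMeasure ν]

theorem planPush_smul_add_smul {a b : ℝ≥0∞} (ha : a ≠ ⊤) (hb : b ≠ ⊤) :
    planPush γ (a • μ + b • ν) = a • planPush γ μ + b • planPush γ ν := by
  have := μ.smul_finite ha
  have := ν.smul_finite hb
  simp only [← snd_planLift]
  rw [planLift_add, planLift_smul ha, planLift_smul hb, Measure.snd_add, Measure.snd,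
    Measure.snd, Measure.map_smul, Measure.map_smul]
  rfl

theorem klDiv_planPush_le (hν : ν ≪ γ.fst) :
    klDiv (planPush γ μ) (planPush γ ν) ≤ klDiv μ ν := by
  by_cases hμν : μ ≪ ν
  · exact (klDiv_map_le (planLift γ μ) (planLift γ ν) measurable_snd).trans_eq
      (klDiv_planLift hμν hν)
  · simp [hμν]

theorem klDiv_planPush_ne_top {m : Measure X} [IsFiniteMeasure m] {K C : ℝ≥0∞} (hK : K ≠ ⊤)
    (hC : C ≠ ⊤) (hfst : m ≤ K • γ.fst) (hsnd : γ.snd ≤ C • m) (hμ : klDiv μ m ≠ ⊤) :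
    klDiv (planPush γ μ) m ≠ ⊤ := by
  have hμ_fst : klDiv μ γ.fst ≠ ⊤ := klDiv_ne_top_of_le_smul hK hfst hμ
  have hpush_snd : klDiv (planPush γ μ) γ.snd ≠ ⊤ := by
    rw [← planPush_fst]
    exact ne_top_of_le_ne_top hμ_fst (klDiv_planPush_le .rfl)
  exact klDiv_ne_top_of_le_smul hC hsnd hpush_snd

theorem klDiv_convexComb_add_planPush_le {σ τ : Measure X} [IsFiniteMeasure σ] [IsFiniteMeasure τ]
    {a b : ℝ} (ha : 0 ≤ a) (hb : 0 ≤ b) (hab : a + b = 1) (hμ : μ ≪ γ.fst) (hν : ν ≪ γ.fst) :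
    klDiv (ENNReal.ofReal a • μ + ENNReal.ofReal b • ν) σ +
        (ENNReal.ofReal a * klDiv (planPush γ μ) τ + ENNReal.ofReal b * klDiv (planPush γ ν) τ) ≤
      (ENNReal.ofReal a * klDiv μ σ + ENNReal.ofReal b * klDiv ν σ) +
        klDiv (planPush γ (ENNReal.ofReal a • μ + ENNReal.ofReal b • ν)) τ := by
  have hM : ENNReal.ofReal a • μ + ENNReal.ofReal b • ν ≪ γ.fst :=
    (hμ.smul_left _).add_left (hν.smul_left _)
  rw [klDiv_compensation_identity (μ := planPush γ μ) ha hb hab,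
    klDiv_compensation_identity (μ := μ) ha hb hab,
    ← planPush_smul_add_smul ENNReal.ofReal_ne_top ENNReal.ofReal_ne_top, add_assoc,
    add_comm (klDiv (planPush γ _) τ)]
  gcongr <;> exact klDiv_planPush_le hM

end PlanPush

theorem stmt18_general {X : Type*} [MeasurableSpace X]
    {m : Measure X} {γ : Measure (X × X)} [IsFiniteMeasure γ]
    {c C : ℝ≥0∞} (hc : 0 < c) (hC : C < ⊤)
    (hfst : c • m ≤ γ.map Prod.fst) (hsnd : γ.map Prod.snd ≤ C • m) :
    (∀ μ : Measure X, IsFiniteMeasure μ → Ent m μ < ⊤ → Ent m (planPush γ μ) < ⊤) ∧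
    (∀ μ₀ μ₁ : Measure X, IsFiniteMeasure μ₀ → IsFiniteMeasure μ₁ →
      Ent m μ₀ < ⊤ → Ent m μ₁ < ⊤ → ∀ t : ℝ, 0 ≤ t → t ≤ 1 →
      Ent m (ENNReal.ofReal (1 - t) • μ₀ + ENNReal.ofReal t • μ₁) +
          (ENNReal.ofReal (1 - t) * Ent m (planPush γ μ₀) +
            ENNReal.ofReal t * Ent m (planPush γ μ₁)) ≤
        (ENNReal.ofReal (1 - t) * Ent m μ₀ + ENNReal.ofReal t * Ent m μ₁) +
          Ent m (planPush γ (ENNReal.ofReal (1 - t) • μ₀ + ENNReal.ofReal t • μ₁))) := by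
  have hc_inv : c⁻¹ ≠ ⊤ := ENNReal.inv_ne_top.2 hc.ne'
  have hm_le : m ≤ c⁻¹ • γ.fst := le_inv_smul_of_smul_le hc.ne' hfst
  have := γ.fst.smul_finite hc_inv
  have : IsFiniteMeasure m := isFiniteMeasure_of_le _ hm_le
  have ac_fst (μ : Measure X) [IsFiniteMeasure μ] (hμ : Ent m μ < ⊤) : μ ≪ γ.fst :=
    (klDiv_ne_top_iff.1 (ent_eq_klDiv m μ ▸ hμ.ne)).1.trans
      (Measure.absolutelyContinuous_of_le_smul hm_le)
  refine ⟨fun μ _ hμ => ?_, fun μ₀ μ₁ _ _ hμ₀ hμ₁ t ht₀ ht₁ => ?_⟩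
  · rw [ent_eq_klDiv, lt_top_iff_ne_top] at hμ ⊢
    exact klDiv_planPush_ne_top hc_inv hC.ne hm_le hsnd hμ
  · simp only [ent_eq_klDiv]
    exact klDiv_convexComb_add_planPush_le (sub_nonneg.2 ht₁) ht₀ (sub_add_cancel 1 t)
      (ac_fst μ₀ hμ₀) (ac_fst μ₁ hμ₁)

/-- **Plans with bounded deformation preserve the entropy domain, and entropy gain is
convex** (Proposition 5.4(ii),(iii)): if `c·m ≤ πⁱ_♯γ ≤ C·m` (`i = 1,2`), then
`γ_♯μ ∈ D(Ent_m)` for all `μ ∈ D(Ent_m)`, and `μ ↦ Ent_m(μ) - Ent_m(γ_♯μ)` is convex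
w.r.t. linear interpolation of measures (stated with the finite subtracted terms moved to
the other side of the inequality). -/
theorem stmt18 {X : Type*} [MetricSpace X] [CompactSpace X] [Nonempty X]
    [MeasurableSpace X] [BorelSpace X]
    (m : Measure X) [IsProbabilityMeasure m]
    (γ : Measure (X × X)) [IsProbabilityMeasure γ]
    (c C : ℝ≥0∞) (hc : 0 < c) (hC : C < ⊤)
    (h1 : c • m ≤ γ.map Prod.fst) (h2 : γ.map Prod.fst ≤ C • m)
    (h3 : c • m ≤ γ.map Prod.snd) (h4 : γ.map Prod.snd ≤ C • m) :
    (∀ μ : Measure X, IsProbabilityMeasure μ → Ent m μ < ⊤ → Ent m (planPush γ μ) < ⊤) ∧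
    (∀ μ₀ μ₁ : Measure X, IsProbabilityMeasure μ₀ → IsProbabilityMeasure μ₁ →
      Ent m μ₀ < ⊤ → Ent m μ₁ < ⊤ → ∀ t : ℝ, 0 ≤ t → t ≤ 1 →
      Ent m (ENNReal.ofReal (1 - t) • μ₀ + ENNReal.ofReal t • μ₁) +
          (ENNReal.ofReal (1 - t) * Ent m (planPush γ μ₀) +
            ENNReal.ofReal t * Ent m (planPush γ μ₁)) ≤
        (ENNReal.ofReal (1 - t) * Ent m μ₀ + ENNReal.ofReal t * Ent m μ₁) +
          Ent m (planPush γ (ENNReal.ofReal (1 - t) • μ₀ + ENNReal.ofReal t • μ₁))) := by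
  obtain ⟨entropy_lt_top, convex⟩ := stmt18_general hc hC h1 h4
  exact ⟨fun μ _ => entropy_lt_top μ inferInstance,
    fun μ₀ μ₁ _ _ => convex μ₀ μ₁ inferInstance inferInstance⟩
end
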